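/- Let H be a complex Hilbert space, ω a bounded self-adjoint operator on H with ω ≥ Id, f ∈ H and λ ≥ 0. Set g = ω^{1/2}f and ξ = (ω² + 4λ|g⟩⟨g|)^{1/2}. Then the operator ω^{-1/2}ξω^{-1/2} − Id is positive, the operator Id − ω^{1/2}ξ⁻¹ω^{1/2} is positive, and for every Hilbert (orthonormal) basis (e_i) of H one has ∑_i ⟨e_i, (ω^{-1/2}ξω^{-1/2} − Id) e_i⟩ ≤ 2λ‖ω^{-1/2}f‖² and ∑_i ⟨e_i, (Id − ω^{1/2}ξ⁻¹ω^{1/2}) e_i⟩ ≤ 2λ‖ω^{-1/2}f‖². -/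

import Mathlib

open scoped InnerProductSpace
open MeasureTheory
set_option synthInstance.maxHeartbeats 1000000
set_option maxHeartbeats 1000000

/-- The rank-one operator `|g⟩⟨g| : x ↦ ⟨g, x⟩g`. -/
noncomputable def rankOne {H : Type*} [NormedAddCommGroup H] [InnerProductSpace ℂ H]
    (g : H) : H →L[ℂ] H := (innerSL ℂ g).smulRight g

/-
Conjugating by `ω^{-1/2}` turns `ξ² - ω² = 4λ|g⟩⟨g|` into a Lyapunov inequality
`ωB + Bω ≤ 4λ|f⟩⟨f|` for `B = ω^{-1/2}ξω^{-1/2} - 1`, the term dropped being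
`-ω^{-1/2}(ξ - ω)²ω^{-1/2}`. Since `ω` is bounded below by a positive constant, `B` is recovered as
`∫₀^∞ e^{-tω}(ωB + Bω)e^{-tω} dt`, so `tr B ≤ 4λ ∫₀^∞ ‖e^{-tω}f‖² dt = 2λ⟨f, ω⁻¹f⟩`. No trace class
property of `B` is needed beforehand, whereas cyclicity of the trace would require one. The other
operator is `1 - M⁻¹` with `M = 1 + B`, and `1 - M⁻¹ ≤ M - 1`.
-/

open NormedSpace (exp)
open scoped Ring Topology

section LyapunovFlow

/-- The semigroup `b ↦ e^{-ta} b e^{-ta}` generated by minus the Lyapunov operator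
`b ↦ ab + ba`, used to invert that operator. -/
noncomputable def lyapunovFlow {A : Type*} [NormedRing A] [NormedAlgebra ℝ A]
    (a : A) (t : ℝ) (b : A) : A :=
  exp (t • -a) * b * exp (t • -a)

section BanachAlgebra

variable {A : Type*} [NormedRing A] [NormedAlgebra ℝ A]

theorem lyapunovFlow_zero_left (a b : A) : lyapunovFlow a 0 b = b := by
  simp [lyapunovFlow]

theorem hasDerivAt_lyapunovFlow [CompleteSpace A] (a b : A) (t : ℝ) :
    HasDerivAt (fun s ↦ lyapunovFlow a s b) (-lyapunovFlow a t (a * b + b * a)) t := by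
  have hleft := hasDerivAt_exp_smul_const (𝕂 := ℝ) (-a) t
  have hright := hasDerivAt_exp_smul_const' (𝕂 := ℝ) (-a) t
  refine ((hleft.mul_const b).mul hright).congr_deriv ?_
  simp only [lyapunovFlow]
  noncomm_ring

theorem continuous_lyapunovFlow [CompleteSpace A] (a b : A) :
    Continuous fun t ↦ lyapunovFlow a t b :=
  continuous_iff_continuousAt.2 fun t ↦ (hasDerivAt_lyapunovFlow a b t).continuousAt

end BanachAlgebra

variable {A : Type*} [CStarAlgebra A] [PartialOrder A] [StarOrderedRing A]

theorem norm_exp_le_of_le_algebraMap {a : A} {c : ℝ} (ha : IsSelfAdjoint a)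
    (hac : a ≤ algebraMap ℝ A c) : ‖exp a‖ ≤ Real.exp c := by
  rw [← CFC.real_exp_eq_normedSpace_exp]
  refine norm_cfc_le (Real.exp_nonneg c) fun x hx ↦ ?_
  rw [Real.norm_of_nonneg (Real.exp_nonneg x), Real.exp_le_exp]
  exact (le_algebraMap_iff_spectrum_le ha).1 hac x hx

theorem exists_pos_algebraMap_le_of_isStrictlyPositive {a : A} (ha : IsStrictlyPositive a) :
    ∃ c > 0, algebraMap ℝ A c ≤ a := by
  cases subsingleton_or_nontrivial A
  · exact ⟨1, one_pos, (Subsingleton.elim _ _).le⟩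
  · exact (CFC.exists_pos_algebraMap_le_iff ha.isSelfAdjoint).2 fun _ hx ↦ ha.spectrum_pos hx

theorem norm_lyapunovFlow_le {a : A} {c t : ℝ} (ha : IsSelfAdjoint a)
    (hca : algebraMap ℝ A c ≤ a) (ht : 0 ≤ t) (b : A) :
    ‖lyapunovFlow a t b‖ ≤ Real.exp (-(2 * c) * t) * ‖b‖ := by
  have hle : t • -a ≤ algebraMap ℝ A (-(c * t)) := by
    have := smul_le_smul_of_nonneg_left (neg_le_neg hca) ht
    simpa [Algebra.algebraMap_eq_smul_one, smul_smul, mul_comm c t] using this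
  have hexp : ‖exp (t • -a)‖ ≤ Real.exp (-(c * t)) :=
    norm_exp_le_of_le_algebraMap ((IsSelfAdjoint.all t).smul ha.neg) hle
  calc ‖lyapunovFlow a t b‖
      ≤ ‖exp (t • -a)‖ * ‖b‖ * ‖exp (t • -a)‖ := norm_mul₃_le
    _ ≤ Real.exp (-(c * t)) * ‖b‖ * Real.exp (-(c * t)) := by gcongr
    _ = Real.exp (-(2 * c) * t) * ‖b‖ := by
        rw [mul_right_comm, ← Real.exp_add]
        ring_nf

theorem tendsto_lyapunovFlow_atTop {a : A} (ha : IsStrictlyPositive a) (b : A) :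
    Filter.Tendsto (fun t ↦ lyapunovFlow a t b) Filter.atTop (𝓝 0) := by
  obtain ⟨c, hc, hca⟩ := exists_pos_algebraMap_le_of_isStrictlyPositive ha
  have hdecay : Filter.Tendsto (fun t ↦ Real.exp (-(2 * c) * t) * ‖b‖) Filter.atTop (𝓝 0) := by
    have hlin : Filter.Tendsto (fun t ↦ -(2 * c) * t) Filter.atTop Filter.atBot :=
      Filter.tendsto_id.const_mul_atTop_of_neg (by linarith)
    simpa using (Real.tendsto_exp_atBot.comp hlin).mul_const ‖b‖
  refine squeeze_zero_norm' ?_ hdecay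
  filter_upwards [Filter.eventually_ge_atTop 0] with t ht
  exact norm_lyapunovFlow_le ha.isSelfAdjoint hca ht b

theorem integrableOn_lyapunovFlow {a : A} (ha : IsStrictlyPositive a) (b : A) :
    IntegrableOn (fun t ↦ lyapunovFlow a t b) (Set.Ioi 0) := by
  obtain ⟨c, hc, hca⟩ := exists_pos_algebraMap_le_of_isStrictlyPositive ha
  have hdom : IntegrableOn (fun t ↦ Real.exp (-(2 * c) * t) * ‖b‖) (Set.Ioi 0) :=
    (integrableOn_exp_mul_Ioi (by linarith) 0).mul_const ‖b‖
  refine hdom.mono' (continuous_lyapunovFlow a b).aestronglyMeasurable ?_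
  filter_upwards [ae_restrict_mem measurableSet_Ioi] with t ht
  exact norm_lyapunovFlow_le ha.isSelfAdjoint hca ht.le b

theorem integral_lyapunovFlow {a : A} (ha : IsStrictlyPositive a) (b : A) :
    ∫ t in Set.Ioi 0, lyapunovFlow a t (a * b + b * a) = b := by
  have hFTC := integral_Ioi_of_hasDerivAt_of_tendsto' (fun t _ ↦ hasDerivAt_lyapunovFlow a b t)
    (integrableOn_lyapunovFlow ha _).neg (tendsto_lyapunovFlow_atTop ha b)
  simpa [integral_neg, lyapunovFlow_zero_left] using hFTC

theorem le_of_forall_lyapunovFlow_le {a b c : A} (ha : IsStrictlyPositive a) {φ ψ : A →L[ℝ] ℝ}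
    (h : ∀ t, φ (lyapunovFlow a t (a * b + b * a)) ≤ ψ (lyapunovFlow a t (a * c + c * a))) :
    φ b ≤ ψ c := by
  have hb := integrableOn_lyapunovFlow ha (a * b + b * a)
  have hc := integrableOn_lyapunovFlow ha (a * c + c * a)
  calc φ b = ∫ t in Set.Ioi 0, φ (lyapunovFlow a t (a * b + b * a)) := by
        rw [φ.integral_comp_comm hb, integral_lyapunovFlow ha]
    _ ≤ ∫ t in Set.Ioi 0, ψ (lyapunovFlow a t (a * c + c * a)) :=
        integral_mono (φ.integrable_comp hb) (ψ.integrable_comp hc) h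
    _ = ψ c := by rw [ψ.integral_comp_comm hc, integral_lyapunovFlow ha]

end LyapunovFlow

section SquareRoot

variable {A : Type*} [CStarAlgebra A] [PartialOrder A] [StarOrderedRing A]

theorem one_sub_ringInverse_le {a : A} (ha : IsStrictlyPositive a) : 1 - a⁻¹ʳ ≤ a - 1 := by
  have hconj : (a - 1) * a⁻¹ʳ * (a - 1) = (a - 1) - (1 - a⁻¹ʳ) := by
    rw [sub_mul, Ring.mul_inverse_cancel a ha.isUnit, one_mul, mul_sub, sub_mul,
      Ring.inverse_mul_cancel a ha.isUnit]
    noncomm_ring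
  have hsa : IsSelfAdjoint (a - 1) := ha.isSelfAdjoint.sub (.one A)
  rw [← sub_nonneg, ← hconj]
  exact hsa.conjugate_nonneg ha.ringInverse.nonneg

theorem le_sqrt_sq_add {a b : A} (ha : 0 ≤ a) (hb : 0 ≤ b) : a ≤ CFC.sqrt (a ^ 2 + b) := by
  calc a = CFC.sqrt (a ^ 2) := (CFC.sqrt_sq a ha).symm
    _ ≤ CFC.sqrt (a ^ 2 + b) := CFC.sqrt_le_sqrt _ _ (le_add_of_nonneg_right hb)

theorem ringInverse_sqrt_mul_self {a : A} (ha : IsStrictlyPositive a) :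
    (CFC.sqrt a)⁻¹ʳ * (CFC.sqrt a)⁻¹ʳ = a⁻¹ʳ := by
  rw [← Ring.inverse_mul (.inl ha.isUnit_cfcSqrt), CFC.sqrt_mul_sqrt_self a ha.nonneg]

theorem commute_ringInverse_sqrt_self {a : A} (ha : IsStrictlyPositive a) :
    Commute (CFC.sqrt a)⁻¹ʳ a := by
  have hu : IsUnit (CFC.sqrt a) := ha.isUnit_cfcSqrt
  have hcomm : Commute (CFC.sqrt a)⁻¹ʳ (CFC.sqrt a) :=
    (Ring.inverse_mul_cancel _ hu).trans (Ring.mul_inverse_cancel _ hu).symm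
  simpa only [CFC.sqrt_mul_sqrt_self a ha.nonneg] using hcomm.mul_right hcomm

theorem ringInverse_sqrt_mul_mul_ringInverse_sqrt {a : A} (ha : IsStrictlyPositive a) :
    (CFC.sqrt a)⁻¹ʳ * a * (CFC.sqrt a)⁻¹ʳ = 1 := by
  rw [(commute_ringInverse_sqrt_self ha).eq, mul_assoc, ringInverse_sqrt_mul_self ha,
    Ring.mul_inverse_cancel a ha.isUnit]

theorem ringInverse_conj_ringInverse_sqrt {a : A} (ha : IsStrictlyPositive a) (b : A) :
    ((CFC.sqrt a)⁻¹ʳ * b * (CFC.sqrt a)⁻¹ʳ)⁻¹ʳ = CFC.sqrt a * b⁻¹ʳ * CFC.sqrt a := by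
  have hu : IsUnit (CFC.sqrt a) := ha.isUnit_cfcSqrt
  rw [Ring.inverse_mul (.inr hu.ringInverse), Ring.inverse_mul (.inl hu.ringInverse),
    Ring.inverse_inverse hu, mul_assoc]

theorem mul_sub_add_sub_mul_le_sq_sub_sq {a b : A} (ha : IsSelfAdjoint a)
    (hb : IsSelfAdjoint b) : a * (b - a) + (b - a) * a ≤ b ^ 2 - a ^ 2 := by
  have hsq : b ^ 2 - a ^ 2 = a * (b - a) + (b - a) * a + (b - a) ^ 2 := by noncomm_ring
  rw [hsq]
  exact le_add_of_nonneg_right (hb.sub ha).sq_nonneg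

theorem lyapunov_conj_ringInverse_sqrt_le {a b : A} (ha : IsStrictlyPositive a)
    (hb : IsSelfAdjoint b) :
    a * ((CFC.sqrt a)⁻¹ʳ * b * (CFC.sqrt a)⁻¹ʳ - 1)
        + ((CFC.sqrt a)⁻¹ʳ * b * (CFC.sqrt a)⁻¹ʳ - 1) * a
      ≤ (CFC.sqrt a)⁻¹ʳ * (b ^ 2 - a ^ 2) * (CFC.sqrt a)⁻¹ʳ := by
  set r := (CFC.sqrt a)⁻¹ʳ
  have hrsa : IsSelfAdjoint r := (CFC.sqrt_nonneg a).isSelfAdjoint.ringInverse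
  have hra : r * a = a * r := commute_ringInverse_sqrt_self ha
  have hdiff : r * b * r - 1 = r * (b - a) * r := by
    rw [mul_sub, sub_mul, ringInverse_sqrt_mul_mul_ringInverse_sqrt ha]
  calc a * (r * b * r - 1) + (r * b * r - 1) * a
      = (a * r) * (b - a) * r + r * (b - a) * (r * a) := by
        rw [hdiff]
        simp only [mul_assoc]
    _ = (r * a) * (b - a) * r + r * (b - a) * (a * r) := by rw [hra]
    _ = r * (a * (b - a) + (b - a) * a) * r := by simp only [mul_assoc, mul_add, add_mul]
    _ ≤ r * (b ^ 2 - a ^ 2) * r :=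
        hrsa.conjugate_le_conjugate (mul_sub_add_sub_mul_le_sq_sub_sq ha.isSelfAdjoint hb)

end SquareRoot

section Trace

variable {H : Type*} [NormedAddCommGroup H] [InnerProductSpace ℂ H]

/-- The functional `T ↦ re ⟨x, Tx⟩` on operators, bundled as a continuous real-linear map so that it
commutes with integrals. -/
noncomputable def vectorState (x : H) : (H →L[ℂ] H) →L[ℝ] ℝ :=
  Complex.reCLM ∘L
    ((innerSL ℂ x).restrictScalars ℝ ∘L (ContinuousLinearMap.apply ℂ H x).restrictScalars ℝ)

theorem vectorState_apply (x : H) (T : H →L[ℂ] H) : vectorState x T = (⟪x, T x⟫_ℂ).re := rfl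

/-- The trace `∑ᵢ ⟨eᵢ, Teᵢ⟩` of a positive operator along the family `e`. It takes values in
`[0, ∞]`, negative diagonal entries being counted as `0`. -/
noncomputable def traceAlong {ι : Type*} (e : ι → H) (T : H →L[ℂ] H) : ENNReal :=
  ∑' i, ENNReal.ofReal (vectorState (e i) T)

theorem vectorState_mono (x : H) : Monotone (vectorState x) := fun S T hST ↦ by
  rw [← sub_nonneg, ← map_sub]
  exact ((ContinuousLinearMap.le_def S T).1 hST).re_inner_nonneg_right x

theorem traceAlong_mono {ι : Type*} (e : ι → H) : Monotone (traceAlong e) := fun _ _ hST ↦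
  ENNReal.tsum_le_tsum fun i ↦ ENNReal.ofReal_le_ofReal (vectorState_mono (e i) hST)

theorem rankOne_nonneg (g : H) : 0 ≤ rankOne g :=
  (ContinuousLinearMap.nonneg_iff_isPositive _).2 (InnerProductSpace.isPositive_rankOne_self g)

theorem vectorState_rankOne (x g : H) : vectorState x (rankOne g) = ‖⟪x, g⟫_ℂ‖ ^ 2 := by
  rw [vectorState_apply, rankOne, ContinuousLinearMap.smulRight_apply, innerSL_apply_apply,
    inner_smul_right, ← inner_conj_symm, Complex.conj_mul', ← Complex.ofReal_pow, Complex.ofReal_re]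

theorem sum_vectorState_rankOne_le {ι : Type*} {e : ι → H} (he : Orthonormal ℂ e) (g : H)
    (s : Finset ι) : ∑ i ∈ s, vectorState (e i) (rankOne g) ≤ ‖g‖ ^ 2 := by
  simpa only [vectorState_rankOne] using he.sum_inner_products_le g

variable [CompleteSpace H]

theorem conj_rankOne {T : H →L[ℂ] H} (hT : IsSelfAdjoint T) (g : H) :
    T * rankOne g * T = rankOne (T g) := by
  ext x
  simp [rankOne, hT.isSymmetric.apply_clm]

theorem vectorState_mul_self {T : H →L[ℂ] H} (hT : IsSelfAdjoint T) (x : H) :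
    vectorState x (T * T) = ‖T x‖ ^ 2 := by
  rw [vectorState_apply, mul_apply_eq_comp, ← hT.isSymmetric.apply_clm]
  exact inner_self_eq_norm_sq (𝕜 := ℂ) (T x)

theorem lyapunovFlow_le_smul_rankOne {ω T : H →L[ℂ] H} {c : ℝ} {f : H} (hω : IsSelfAdjoint ω)
    (hT : T ≤ c • rankOne f) (t : ℝ) :
    lyapunovFlow ω t T ≤ c • rankOne (exp (t • -ω) f) := by
  have hE : IsSelfAdjoint (exp (t • -ω)) := ((IsSelfAdjoint.all t).smul hω.neg).exp
  rw [← conj_rankOne hE, ← smul_mul_assoc, ← mul_smul_comm]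
  exact hE.conjugate_le_conjugate hT

theorem sum_vectorState_le_of_lyapunov {ι : Type*} {e : ι → H} (he : Orthonormal ℂ e)
    {ω B : H →L[ℂ] H} (hω : IsStrictlyPositive ω) {c : ℝ} (hc : 0 ≤ c) {f : H}
    (hB : ω * B + B * ω ≤ c • rankOne f) (s : Finset ι) :
    ∑ i ∈ s, vectorState (e i) B ≤ c / 2 * vectorState f ω⁻¹ʳ := by
  have hinv : ω * ((2⁻¹ : ℝ) • ω⁻¹ʳ) + ((2⁻¹ : ℝ) • ω⁻¹ʳ) * ω = 1 := by
    rw [mul_smul_comm, smul_mul_assoc, Ring.mul_inverse_cancel ω hω.isUnit,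
      Ring.inverse_mul_cancel ω hω.isUnit, ← add_smul]
    norm_num
  have hflow : ∀ t, (∑ i ∈ s, vectorState (e i)) (lyapunovFlow ω t (ω * B + B * ω)) ≤
      (c • vectorState f)
        (lyapunovFlow ω t (ω * ((2⁻¹ : ℝ) • ω⁻¹ʳ) + ((2⁻¹ : ℝ) • ω⁻¹ʳ) * ω)) := fun t ↦ by
    have hE : IsSelfAdjoint (exp (t • -ω)) :=
      ((IsSelfAdjoint.all t).smul hω.isSelfAdjoint.neg).exp
    calc (∑ i ∈ s, vectorState (e i)) (lyapunovFlow ω t (ω * B + B * ω))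
        ≤ ∑ i ∈ s, vectorState (e i) (c • rankOne (exp (t • -ω) f)) := by
          rw [sum_apply]
          exact Finset.sum_le_sum fun i _ ↦ vectorState_mono (e i)
            (lyapunovFlow_le_smul_rankOne hω.isSelfAdjoint hB t)
      _ = c * ∑ i ∈ s, vectorState (e i) (rankOne (exp (t • -ω) f)) := by
          simp only [map_smul, smul_eq_mul, Finset.mul_sum]
      _ ≤ c * ‖exp (t • -ω) f‖ ^ 2 := by
          gcongr
          exact sum_vectorState_rankOne_le he _ s
      _ = (c • vectorState f) (lyapunovFlow ω t _) := by
          rw [hinv, lyapunovFlow, mul_one, smul_apply, vectorState_mul_self hE, smul_eq_mul]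
  have hcmp := le_of_forall_lyapunovFlow_le hω hflow
  rw [sum_apply, smul_apply, map_smul] at hcmp
  simpa only [smul_eq_mul, ← mul_assoc, ← div_eq_mul_inv] using hcmp

theorem traceAlong_le_of_lyapunov {ι : Type*} {e : ι → H} (he : Orthonormal ℂ e)
    {ω B : H →L[ℂ] H} (hω : IsStrictlyPositive ω) (hB_nonneg : 0 ≤ B) {c : ℝ} (hc : 0 ≤ c) {f : H}
    (hB : ω * B + B * ω ≤ c • rankOne f) :
    traceAlong e B ≤ ENNReal.ofReal (c / 2 * vectorState f ω⁻¹ʳ) := by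
  refine ENNReal.summable.tsum_le_of_sum_le fun s ↦ ?_
  rw [← ENNReal.ofReal_sum_of_nonneg fun i _ ↦ ?_]
  · exact ENNReal.ofReal_le_ofReal (sum_vectorState_le_of_lyapunov he hω hc hB s)
  · simpa using vectorState_mono (e i) hB_nonneg

theorem lyapunov_conj_ringInverse_sqrt_le_smul_rankOne {ω ξ : H →L[ℂ] H}
    (hω : IsStrictlyPositive ω) (hξ : IsSelfAdjoint ξ) {c : ℝ} {f : H}
    (hsq : ξ ^ 2 = ω ^ 2 + c • rankOne (CFC.sqrt ω f)) :
    ω * ((CFC.sqrt ω)⁻¹ʳ * ξ * (CFC.sqrt ω)⁻¹ʳ - 1)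
        + ((CFC.sqrt ω)⁻¹ʳ * ξ * (CFC.sqrt ω)⁻¹ʳ - 1) * ω ≤ c • rankOne f := by
  have hrsa : IsSelfAdjoint (CFC.sqrt ω)⁻¹ʳ := (CFC.sqrt_nonneg ω).isSelfAdjoint.ringInverse
  have hf : (CFC.sqrt ω)⁻¹ʳ (CFC.sqrt ω f) = f :=
    DFunLike.congr_fun (Ring.inverse_mul_cancel _ hω.isUnit_cfcSqrt) f
  refine (lyapunov_conj_ringInverse_sqrt_le hω hξ).trans_eq ?_
  rw [hsq, add_sub_cancel_left, mul_smul_comm, smul_mul_assoc, conj_rankOne hrsa, hf]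

end Trace

theorem trace_bounds_bogoliubov_general
    {H : Type*} [NormedAddCommGroup H] [InnerProductSpace ℂ H] [CompleteSpace H]
    {ι : Type*}
    (ω : H →L[ℂ] H) (hω : IsStrictlyPositive ω)
    (f : H) (lam : ℝ) (hlam : 0 ≤ lam)
    (g : H) (hg : g = CFC.sqrt ω f)
    (ξ : H →L[ℂ] H) (hξ : ξ = CFC.sqrt (ω ^ 2 + (4 * lam) • rankOne g))
    (e : ι → H) (he : Orthonormal ℂ e) :
    0 ≤ (CFC.sqrt ω)⁻¹ʳ * ξ * (CFC.sqrt ω)⁻¹ʳ - 1 ∧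
    0 ≤ 1 - CFC.sqrt ω * ξ⁻¹ʳ * CFC.sqrt ω ∧
    traceAlong e ((CFC.sqrt ω)⁻¹ʳ * ξ * (CFC.sqrt ω)⁻¹ʳ - 1) ≤
      ENNReal.ofReal (2 * lam * ‖(CFC.sqrt ω)⁻¹ʳ f‖ ^ 2) ∧
    traceAlong e (1 - CFC.sqrt ω * ξ⁻¹ʳ * CFC.sqrt ω) ≤
      ENNReal.ofReal (2 * lam * ‖(CFC.sqrt ω)⁻¹ʳ f‖ ^ 2) := by
  set r := (CFC.sqrt ω)⁻¹ʳ
  have hrsa : IsSelfAdjoint r := (CFC.sqrt_nonneg ω).isSelfAdjoint.ringInverse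
  have hpert : 0 ≤ (4 * lam) • rankOne g := smul_nonneg (by positivity) (rankOne_nonneg g)
  have hωξ : ω ≤ ξ := hξ ▸ le_sqrt_sq_add hω.nonneg hpert
  have hsq : ξ ^ 2 = ω ^ 2 + (4 * lam) • rankOne (CFC.sqrt ω f) := by
    rw [hξ, ← hg, CFC.sq_sqrt _ (add_nonneg hω.isSelfAdjoint.sq_nonneg hpert)]
  have hone : 1 ≤ r * ξ * r := by
    rw [← ringInverse_sqrt_mul_mul_ringInverse_sqrt hω]
    exact hrsa.conjugate_le_conjugate hωξ
  have htrace : traceAlong e (r * ξ * r - 1) ≤ ENNReal.ofReal (2 * lam * ‖r f‖ ^ 2) := by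
    have hlyap := lyapunov_conj_ringInverse_sqrt_le_smul_rankOne hω
      (hω.of_le hωξ).isSelfAdjoint hsq
    refine (traceAlong_le_of_lyapunov he hω (sub_nonneg.2 hone) (by positivity) hlyap).trans_eq ?_
    rw [← ringInverse_sqrt_mul_self hω, vectorState_mul_self hrsa]
    ring_nf
  have hinv : 1 - (r * ξ * r)⁻¹ʳ ≤ r * ξ * r - 1 :=
    one_sub_ringInverse_le (isStrictlyPositive_one.of_le hone)
  rw [← ringInverse_conj_ringInverse_sqrt hω]
  refine ⟨sub_nonneg.2 hone, sub_nonneg.2 ?_, htrace, (traceAlong_mono e hinv).trans htrace⟩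
  simpa only [Ring.inverse_one] using CStarAlgebra.ringInverse_le_ringInverse hone

/-- Trace bounds of Proposition 5.2: for `ω ≥ Id` self-adjoint, `f ∈ H`, `λ ≥ 0`,
`g = ω^{1/2}f` and `ξ = (ω² + 4λ|g⟩⟨g|)^{1/2}`, the operators `ω^{-1/2}ξω^{-1/2} − Id`
and `Id − ω^{1/2}ξ⁻¹ω^{1/2}` are positive and, for every Hilbert basis `(e i)`, their
diagonal sums are bounded by `2λ‖ω^{-1/2}f‖²`. -/
theorem trace_bounds_bogoliubov
    {H : Type*} [NormedAddCommGroup H] [InnerProductSpace ℂ H] [CompleteSpace H]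
    {ι : Type*}
    (ω : H →L[ℂ] H) (hω : IsSelfAdjoint ω) (hω1 : (1 : H →L[ℂ] H) ≤ ω)
    (f : H) (lam : ℝ) (hlam : 0 ≤ lam)
    (g : H) (hg : g = CFC.sqrt ω f)
    (ξ : H →L[ℂ] H) (hξ : ξ = CFC.sqrt (ω ^ 2 + (4 * lam) • rankOne g))
    (e : HilbertBasis ι ℂ H) :
    0 ≤ Ring.inverse (CFC.sqrt ω) * ξ * Ring.inverse (CFC.sqrt ω) - 1 ∧
    0 ≤ 1 - CFC.sqrt ω * Ring.inverse ξ * CFC.sqrt ω ∧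
    ∑' i, ENNReal.ofReal
        (⟪e i, (Ring.inverse (CFC.sqrt ω) * ξ * Ring.inverse (CFC.sqrt ω) - 1) (e i)⟫_ℂ).re ≤
      ENNReal.ofReal (2 * lam * ‖(Ring.inverse (CFC.sqrt ω)) f‖ ^ 2) ∧
    ∑' i, ENNReal.ofReal
        (⟪e i, (1 - CFC.sqrt ω * Ring.inverse ξ * CFC.sqrt ω) (e i)⟫_ℂ).re ≤
      ENNReal.ofReal (2 * lam * ‖(Ring.inverse (CFC.sqrt ω)) f‖ ^ 2) :=
  trace_bounds_bogoliubov_general ω (isStrictlyPositive_one.of_le hω1) f lam hlam g hg ξ hξ e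
    e.orthonormal
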